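/- arXiv:1103.0247 — 2 statements merged into one kernel-verified Lean document; each statement's English description precedes it below -/
import Mathlib

section
/- If Γ is a set of cardinality strictly greater than 𝔠 (the cardinality of the continuum), then |Γ| is not a Kunen cardinal, i.e. there exists a subset of Γ × Γ that does not belong to the product σ-algebra P(Γ) ⊗ P(Γ). -/
/-- The σ-algebra on `Γ × Γ` generated by all rectangles `A ×ˢ B` with `A, B ⊆ Γ`. -/
def productSigma (Γ : Type*) : MeasurableSpace (Γ × Γ) :=
  MeasurableSpace.generateFrom {S : Set (Γ × Γ) | ∃ A B : Set Γ, S = A ×ˢ B}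

/-!
The diagonal is the witness. Each set of a generated σ-algebra already lies in the σ-algebra
generated by countably many of the generators, so a measurable diagonal would come from countably
many rectangles `Aₙ ×ˢ Bₙ`. Points that lie in the same `Aₙ` would then have the same sections of
the diagonal, hence be equal, and `x ↦ {n | x ∈ Aₙ}` would embed `Γ` into the power set of `ℕ`.
-/

open MeasurableSpace Set
open scoped Cardinal MeasureTheory

section

variable {α β : Type*}

theorem exists_countable_subset_measurableSet_generateFrom {C : Set (Set α)} {s : Set α}
    (hs : MeasurableSet[generateFrom C] s) :
    ∃ D ⊆ C, D.Countable ∧ MeasurableSet[generateFrom D] s := by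
  induction s, hs using generateFrom_induction with
  | hC t ht _ =>
    exact ⟨{t}, singleton_subset_iff.2 ht, countable_singleton t, measurableSet_generateFrom rfl⟩
  | empty => exact ⟨∅, empty_subset C, countable_empty, @MeasurableSet.empty _ (generateFrom ∅)⟩
  | compl t _ ih =>
    obtain ⟨D, hDC, hD, ht⟩ := ih
    exact ⟨D, hDC, hD, ht.compl⟩
  | iUnion f _ ih =>
    choose D hDC hD hf using ih
    exact ⟨⋃ n, D n, iUnion_subset hDC, countable_iUnion hD,
      .iUnion fun n ↦ generateFrom_mono (subset_iUnion D n) _ (hf n)⟩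

theorem exists_countable_forall_prodMk_mem_iff [MeasurableSpace α] [MeasurableSpace β]
    {s : Set (α × β)} (hs : MeasurableSet s) :
    ∃ 𝒜 : Set (Set α), 𝒜.Countable ∧ (∀ A ∈ 𝒜, MeasurableSet A) ∧
      ∀ x y, (∀ A ∈ 𝒜, x ∈ A ↔ y ∈ A) → ∀ z, (x, z) ∈ s ↔ (y, z) ∈ s := by
  rw [← generateFrom_prod] at hs
  obtain ⟨D, hD_rect, hD, hs⟩ := exists_countable_subset_measurableSet_generateFrom hs
  choose! A hA B _ hAB using fun r (hr : r ∈ D) ↦ hD_rect hr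
  refine ⟨A '' D, hD.image A, forall_mem_image.2 hA, fun x y hxy z ↦ ?_⟩
  refine (forall_generateFrom_mem_iff_mem_iff (S := D)).2 (fun r hr ↦ ?_) s hs
  rw [← hAB r hr, prodMk_mem_set_prod_eq, prodMk_mem_set_prod_eq, hxy (A r) (mem_image_of_mem A hr)]

theorem countablySeparated_of_measurableEq [MeasurableSpace α] [MeasurableEq α] :
    CountablySeparated α := by
  obtain ⟨𝒜, h𝒜, h𝒜_meas, h_sections⟩ :=
    exists_countable_forall_prodMk_mem_iff (measurableSet_diagonal (α := α))
  exact ⟨⟨𝒜, h𝒜, h𝒜_meas, fun x _ y _ hxy ↦ ((h_sections x y hxy x).1 rfl).symm⟩⟩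

theorem mk_le_continuum_of_countablySeparated [MeasurableSpace α] [CountablySeparated α] :
    #α ≤ 𝔠 := by
  obtain ⟨f, -, hf⟩ := measurable_injection_nat_bool_of_countablySeparated α
  simpa using Cardinal.mk_le_of_injective (ULift.up_injective.comp hf)

end

theorem productSigma_eq_prod_top (Γ : Type*) :
    productSigma Γ = (⊤ : MeasurableSpace Γ).prod ⊤ := by
  let : MeasurableSpace Γ := ⊤
  refine Eq.trans (congrArg generateFrom ?_) generateFrom_prod
  ext S
  simp [mem_image2, eq_comm]

/-- If `|Γ| > 𝔠` then `|Γ|` is not a Kunen cardinal: there is a subset of `Γ × Γ`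
not belonging to the product σ-algebra `P(Γ) ⊗ P(Γ)`. -/
theorem stmt12 (Γ : Type*) (h : Cardinal.continuum < Cardinal.mk Γ) :
    ∃ S : Set (Γ × Γ), ¬ @MeasurableSet _ (productSigma Γ) S := by
  refine ⟨diagonal Γ, fun h_diagonal ↦ h.not_ge ?_⟩
  let : MeasurableSpace Γ := ⊤
  rw [productSigma_eq_prod_top] at h_diagonal
  have : MeasurableEq Γ := ⟨h_diagonal⟩
  have : CountablySeparated Γ := countablySeparated_of_measurableEq
  exact mk_le_continuum_of_countablySeparated
end

section
/- Let Γ be a set, τ an n-type, (Y, Σ) a measurable space, and Φ : Γ^n → P(Y) a multifunction satisfying property (S). If A = W₁ × ⋯ × W_n and B = W'₁ × ⋯ × W'_n are products of subsets of Γ and A and B are τ-separated, then Φ(A) and Φ(B) are Σ-separated. -/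
/-- An `n`-type: a function from `{0,1}^n` to the closed nonempty intervals of `ℝ`. -/
def IsNType {n : ℕ} (τ : (Fin n → Bool) → Set ℝ) : Prop :=
  ∀ p : Fin n → Bool, ∃ a b : ℝ, a ≤ b ∧ τ p = Set.Icc a b

/-- `γ, δ ∈ Γ^n` are `τ`-proximal. -/
def TauProximal {Γ : Type*} {n : ℕ} (τ : (Fin n → Bool) → Set ℝ)
    (γ δ : Fin n → Γ) : Prop :=
  ∀ U : Γ → Bool, (τ (fun i => U (γ i)) ∩ τ (fun i => U (δ i))).Nonempty

/-- `A, B ⊆ Γ^n` are `τ`-separated: no `γ ∈ A` and `δ ∈ B` are `τ`-proximal. -/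
def TauSeparated {Γ : Type*} {n : ℕ} (τ : (Fin n → Bool) → Set ℝ)
    (A B : Set (Fin n → Γ)) : Prop :=
  ∀ γ ∈ A, ∀ δ ∈ B, ¬ TauProximal τ γ δ

/-- `U, V ⊆ Y` are `Σ`-separated. -/
def SigmaSeparated {Y : Type*} (m : MeasurableSpace Y) (U V : Set Y) : Prop :=
  ∃ S : Set Y, @MeasurableSet _ m S ∧ U ⊆ S ∧ V ∩ S = ∅

/-- The image `Φ(A) = ⋃_{γ ∈ A} Φ(γ)` of a set under a multifunction. -/
def MultiImage {Γ Y : Type*} {n : ℕ} (Φ : (Fin n → Γ) → Set Y)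
    (A : Set (Fin n → Γ)) : Set Y :=
  ⋃ γ ∈ A, Φ γ

/-- Property (S) of a multifunction `Φ : Γ^n → P(Y)`. -/
def PropertyS {Γ Y : Type*} {n : ℕ} (τ : (Fin n → Bool) → Set ℝ)
    (m : MeasurableSpace Y) (Φ : (Fin n → Γ) → Set Y) : Prop :=
  ∀ (U : Γ → Bool) (I : Set ℝ), IsClosed I →
    SigmaSeparated m
      (MultiImage Φ {γ | τ (fun i => U (γ i)) ⊆ I})
      (MultiImage Φ {γ | τ (fun i => U (γ i)) ∩ I = ∅})

/-!
Let `f : Γ → K` be a labelling with countably many labels. If the label tuples `α, β : Fin n → K`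
are not `τ`-proximal, witnessed by `U ⊆ K`, then property (S) applied to `f ⁻¹' U` and the closed
set `τ (1_U ∘ α)` separates the images of the tuples labelled `α` from those of the tuples
labelled `β`. As there are only countably many label tuples, it is enough to label `Γ` so that the
label tuples of `A` and of `B` are still `τ`-separated. For products, send each point of `Γ` to a
chosen point which lies in the same sets `W i` and `W' i`: this map has finite range and
preserves `A` and `B`.
-/

theorem IsNType.isClosed {n : ℕ} {τ : (Fin n → Bool) → Set ℝ} (hτ : IsNType τ)
    (p : Fin n → Bool) : IsClosed (τ p) := by
  obtain ⟨a, b, -, hp⟩ := hτ p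
  exact hp ▸ isClosed_Icc

section SigmaSeparated

variable {Y : Type*} {m : MeasurableSpace Y}

theorem SigmaSeparated.mono {U U' V V' : Set Y} (h : SigmaSeparated m U V)
    (hU : U' ⊆ U) (hV : V' ⊆ V) : SigmaSeparated m U' V' := by
  obtain ⟨S, hSm, hUS, hVS⟩ := h
  exact ⟨S, hSm, hU.trans hUS, Set.subset_eq_empty (Set.inter_subset_inter_left S hV) hVS⟩

theorem SigmaSeparated.iUnion_iUnion {ι κ : Type*} [Countable ι] [Countable κ]
    {U : ι → Set Y} {V : κ → Set Y} (h : ∀ i j, SigmaSeparated m (U i) (V j)) :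
    SigmaSeparated m (⋃ i, U i) (⋃ j, V j) := by
  choose S hSm hUS hVS using h
  refine ⟨⋃ i, ⋂ j, S i j, .iUnion fun i => .iInter fun j => hSm i j,
    Set.iUnion_mono fun i => Set.subset_iInter fun j => hUS i j, ?_⟩
  simp only [← Set.disjoint_iff_inter_eq_empty, Set.disjoint_iUnion_left,
    Set.disjoint_iUnion_right] at hVS ⊢
  exact fun i j => (hVS i j).mono_right (Set.iInter_subset _ j)

end SigmaSeparated

theorem multiImage_mono {Γ Y : Type*} {n : ℕ} (Φ : (Fin n → Γ) → Set Y)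
    {A B : Set (Fin n → Γ)} (h : A ⊆ B) : MultiImage Φ A ⊆ MultiImage Φ B :=
  Set.biUnion_subset_biUnion_left h

theorem multiImage_subset_iUnion_fiber {Γ Y β : Type*} {n : ℕ} (Φ : (Fin n → Γ) → Set Y)
    (A : Set (Fin n → Γ)) (g : (Fin n → Γ) → β) :
    MultiImage Φ A ⊆ ⋃ b : g '' A, MultiImage Φ {γ | g γ = b} :=
  Set.iUnion₂_subset fun γ hγ => Set.subset_iUnion_of_subset ⟨g γ, γ, hγ, rfl⟩ <|
    Set.subset_biUnion_of_mem (u := Φ) rfl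

section Relabelling

variable {Γ K : Type*} {n : ℕ} {τ : (Fin n → Bool) → Set ℝ}

theorem TauProximal.comp {α β : Fin n → K} (h : TauProximal τ α β) (s : K → Γ) :
    TauProximal τ (s ∘ α) (s ∘ β) :=
  fun U => h (U ∘ s)

theorem TauSeparated.of_mapsTo_comp {A B : Set (Fin n → Γ)} {A' B' : Set (Fin n → K)}
    (h : TauSeparated τ A B) (s : K → Γ) (hA : Set.MapsTo (s ∘ ·) A' A)
    (hB : Set.MapsTo (s ∘ ·) B' B) : TauSeparated τ A' B' :=
  fun _ hα _ hβ hαβ => h _ (hA hα) _ (hB hβ) (hαβ.comp s)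

variable {Y : Type*} {m : MeasurableSpace Y} {Φ : (Fin n → Γ) → Set Y}

theorem PropertyS.sigmaSeparated_fiber (hS : PropertyS τ m Φ) (hτ : ∀ p, IsClosed (τ p))
    (f : Γ → K) {α β : Fin n → K} (hαβ : ¬ TauProximal τ α β) :
    SigmaSeparated m (MultiImage Φ {γ | f ∘ γ = α}) (MultiImage Φ {γ | f ∘ γ = β}) := by
  obtain ⟨U, hU⟩ := not_forall.mp hαβ
  refine (hS (U ∘ f) (τ (U ∘ α)) (hτ _)).mono (multiImage_mono Φ ?_) (multiImage_mono Φ ?_)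
  · rintro γ rfl
    exact Set.Subset.rfl
  · rintro γ rfl
    exact (Set.inter_comm _ _).trans (Set.not_nonempty_iff_eq_empty.mp hU)

theorem PropertyS.sigmaSeparated_of_tauSeparated_image [Countable K] (hS : PropertyS τ m Φ)
    (hτ : ∀ p, IsClosed (τ p)) (f : Γ → K) {A B : Set (Fin n → Γ)}
    (hAB : TauSeparated τ ((f ∘ ·) '' A) ((f ∘ ·) '' B)) :
    SigmaSeparated m (MultiImage Φ A) (MultiImage Φ B) := by
  have fibers_separated (α : (f ∘ ·) '' A) (β : (f ∘ ·) '' B) :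
      SigmaSeparated m (MultiImage Φ {γ | f ∘ γ = α}) (MultiImage Φ {γ | f ∘ γ = β}) :=
    hS.sigmaSeparated_fiber hτ f (hAB α α.2 β β.2)
  exact (SigmaSeparated.iUnion_iUnion fibers_separated).mono
    (multiImage_subset_iUnion_fiber Φ A (f ∘ ·)) (multiImage_subset_iUnion_fiber Φ B (f ∘ ·))

end Relabelling

theorem exists_finite_range_forall_mapsTo {Γ ι : Type*} [Finite ι] (V : ι → Set Γ) :
    ∃ r : Γ → Γ, (Set.range r).Finite ∧ ∀ i, Set.MapsTo r (V i) (V i) := by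
  let pattern (x : Γ) : Set ι := {i | x ∈ V i}
  let r : Γ → Γ := Set.rangeSplitting pattern ∘ Set.rangeFactorization pattern
  have pattern_r (x : Γ) : pattern (r x) = pattern x := Set.apply_rangeSplitting pattern _
  refine ⟨r, (Set.finite_range _).subset (Set.range_comp_subset_range _ _), fun i x hx => ?_⟩
  change i ∈ pattern (r x)
  rwa [pattern_r]

theorem stmt16_general {Γ Y : Type*} {n : ℕ} {τ : (Fin n → Bool) → Set ℝ}
    (hτ : ∀ p, IsClosed (τ p)) {m : MeasurableSpace Y} {Φ : (Fin n → Γ) → Set Y}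
    (hS : PropertyS τ m Φ) {W W' : Fin n → Set Γ}
    (hAB : TauSeparated τ (Set.univ.pi W) (Set.univ.pi W')) :
    SigmaSeparated m (MultiImage Φ (Set.univ.pi W)) (MultiImage Φ (Set.univ.pi W')) := by
  obtain ⟨r, hr_finite, hr⟩ := exists_finite_range_forall_mapsTo (Sum.elim W W')
  have : Countable (Set.range r) := hr_finite.countable
  refine hS.sigmaSeparated_of_tauSeparated_image hτ (Set.rangeFactorization r) ?_
  refine hAB.of_mapsTo_comp Subtype.val ?_ ?_
  · rintro _ ⟨γ, hγ, rfl⟩ i hi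
    exact hr (.inl i) (hγ i hi)
  · rintro _ ⟨δ, hδ, rfl⟩ i hi
    exact hr (.inr i) (hδ i hi)

/-- If `A = W₁ × ⋯ × W_n` and `B = W'₁ × ⋯ × W'_n` are products of subsets of `Γ` which
are `τ`-separated, and `Φ` satisfies property (S), then `Φ(A)` and `Φ(B)` are
`Σ`-separated. -/
theorem stmt16 (Γ : Type*) (n : ℕ) (τ : (Fin n → Bool) → Set ℝ) (hτ : IsNType τ)
    (Y : Type*) (m : MeasurableSpace Y) (Φ : (Fin n → Γ) → Set Y)
    (hS : PropertyS τ m Φ)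
    (W W' : Fin n → Set Γ)
    (hAB : TauSeparated τ (Set.univ.pi W) (Set.univ.pi W')) :
    SigmaSeparated m (MultiImage Φ (Set.univ.pi W)) (MultiImage Φ (Set.univ.pi W')) :=
  stmt16_general hτ.isClosed hS hAB
end
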